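/- arXiv:2410.24158 — 5 statements merged into one kernel-verified Lean document; each statement's English description precedes it below -/
import Mathlib

section
/- Let p ≥ 2 be a real number and let x, Δ ∈ ℝ^n. Define r ∈ ℝ^n coordinatewise by r_i = |x_i|^{p−2}. Then (p/8)·Σ_i r_i Δ_i² + (1/2^{p+1})·‖Δ‖_p^p ≤ ω_p(x+Δ, x) ≤ 2p²·Σ_i r_i Δ_i² + p^p·‖Δ‖_p^p. -/
/-!
Both inequalities hold coordinate by coordinate. For one coordinate, homogeneity of degree `p` and
the symmetry `(x, d) ↦ (-x, -d)` reduce the claim to base point `1` and increment `e * t` with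
`e = ±1`, `t ≥ 0` (base point `0` is immediate). There all three terms vanish at `t = 0`, so it is
enough to compare their derivatives in `t`: after dividing by `p` this is
`t / 4 + t ^ (p - 1) / 2 ^ (p + 1) ≤ e * (φ (1 + e * t) - 1) ≤ 4 * p * t + p ^ p * t ^ (p - 1)`
with `φ y = |y| ^ (p - 2) * y`. The lower bound (`key_lower`) follows from
`(t / 2) ^ (p - 1) ≤ t / 2` for `t ≤ 2` and superadditivity or monotonicity of the power for large
`t`. The upper bound (`key_upper`) uses Bernoulli's inequality, `(1 + t) ^ (p - 1) ≤ exp ((p - 1) t)`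
for small `t`, and `(p + 1) ^ (p - 1) ≤ p ^ p` for large `t`.
-/

open Finset

/-- The ℓ_p "norm" for real exponent p: ‖x‖_p = (Σ_i |x_i|^p)^(1/p). -/
noncomputable def lpNorm {n : ℕ} (p : ℝ) (x : Fin n → ℝ) : ℝ :=
  (∑ i, |x i| ^ p) ^ (1 / p)

/-- Bregman divergence of ‖·‖_p^p :
ω_p(x,y) = ‖x‖_p^p − ‖y‖_p^p − Σ_i p|y_i|^{p−2} y_i (x_i − y_i). -/
noncomputable def omegaP {n : ℕ} (p : ℝ) (x y : Fin n → ℝ) : ℝ :=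
  (∑ i, |x i| ^ p) - (∑ i, |y i| ^ p) - ∑ i, p * |y i| ^ (p - 2) * y i * (x i - y i)

lemma abs_rpow_mul_self {p y : ℝ} (hp : 2 ≤ p) (hy : 0 ≤ y) :
    |y| ^ (p - 2) * y = y ^ (p - 1) := by
  rw [abs_of_nonneg hy]
  rcases hy.eq_or_lt with rfl | hy
  · rw [mul_zero, Real.zero_rpow (by linarith)]
  · rw [← Real.rpow_add_one hy.ne']; congr 1; ring

lemma coeff_mul_rpow {p t : ℝ} (ht : 0 ≤ t) :
    1 / 2 ^ (p + 1) * t ^ (p - 1) = (t / 2) ^ (p - 1) / 4 := by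
  have h : (2 : ℝ) ^ (p + 1) = 2 ^ (p - 1) * 4 := by
    rw [show p + 1 = (p - 1) + 2 by ring, Real.rpow_add two_pos]; norm_num
  rw [Real.div_rpow ht two_pos.le, h]
  field_simp

lemma key_lower {p e t : ℝ} (hp : 2 ≤ p) (he : e = 1 ∨ e = -1) (ht : 0 < t) :
    1 / 4 * t + 1 / 2 ^ (p + 1) * t ^ (p - 1)
      ≤ e * (|1 + e * t| ^ (p - 2) * (1 + e * t) - 1) := by
  have hq : 1 ≤ p - 1 := by linarith
  rw [coeff_mul_rpow ht.le]
  have small : t ≤ 2 → (t / 2) ^ (p - 1) ≤ t / 2 := fun h => by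
    have := Real.rpow_le_rpow_of_exponent_ge (x := t / 2) (by linarith) (by linarith) hq
    rwa [Real.rpow_one] at this
  rcases he with rfl | rfl
  · rw [one_mul, one_mul, abs_rpow_mul_self hp (by linarith)]
    have h1 : (1 + t) ^ (1 : ℝ) ≤ (1 + t) ^ (p - 1) :=
      Real.rpow_le_rpow_of_exponent_le (by linarith) hq
    have h2 := Real.add_rpow_le_rpow_add (p := p - 1) zero_le_one ht.le hq
    have h3 : (t / 2) ^ (p - 1) ≤ t ^ (p - 1) :=
      Real.rpow_le_rpow (by linarith) (by linarith) (by linarith)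
    have h4 : 0 ≤ (t / 2) ^ (p - 1) := by positivity
    rw [Real.rpow_one] at h1
    rw [Real.one_rpow] at h2
    linarith
  · rcases le_total t 1 with h | h
    · rw [abs_rpow_mul_self hp (by linarith)]
      have h1 : (1 + -1 * t) ^ (p - 1) ≤ 1 + -1 * t := by
        have := Real.rpow_le_rpow_of_exponent_ge' (x := 1 + -1 * t) (by linarith) (by linarith)
          zero_le_one hq
        rwa [Real.rpow_one] at this
      linarith [small (by linarith)]
    · have h0 : |1 + -1 * t| ^ (p - 2) * (1 + -1 * t) = -(t - 1) ^ (p - 1) := by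
        rw [← abs_rpow_mul_self hp (sub_nonneg.2 h), abs_sub_comm t 1,
          show 1 + -1 * t = 1 - t by ring]
        ring
      rw [h0]
      rcases le_total t 2 with h2 | h2
      · have : 0 ≤ (t - 1) ^ (p - 1) := Real.rpow_nonneg (by linarith) _
        linarith [small h2]
      · have h3 : (t / 2) ^ (p - 1) ≤ (t - 1) ^ (p - 1) :=
          Real.rpow_le_rpow (by linarith) (by linarith) (by linarith)
        have h1 : (t - 1) ^ (1 : ℝ) ≤ (t - 1) ^ (p - 1) :=
          Real.rpow_le_rpow_of_exponent_le (by linarith) hq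
        rw [Real.rpow_one] at h1
        linarith

lemma one_add_rpow_le_exp {s q : ℝ} (hs : 0 ≤ s) (hq : 0 ≤ q) :
    (1 + s) ^ q ≤ Real.exp (s * q) := by
  rw [Real.exp_mul]
  exact Real.rpow_le_rpow (by linarith) (by linarith [Real.add_one_le_exp s]) hq

lemma add_one_rpow_le {p : ℝ} (hp : 2 ≤ p) : (p + 1) ^ (p - 1) ≤ p ^ p := by
  have hp0 : 0 < p := by linarith
  have h1 : (1 + p⁻¹) ^ (p - 1) ≤ p := by
    refine (one_add_rpow_le_exp (by positivity) (by linarith)).trans ?_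
    rw [← Real.le_log_iff_exp_le hp0]
    have := Real.one_sub_inv_le_log_of_pos hp0
    have h : p⁻¹ * (p - 1) = 1 - p⁻¹ := by field_simp
    linarith
  calc (p + 1) ^ (p - 1) = p ^ (p - 1) * (1 + p⁻¹) ^ (p - 1) := by
        rw [← Real.mul_rpow hp0.le (by positivity)]; congr 1; field_simp
    _ ≤ p ^ (p - 1) * p := by gcongr
    _ = p ^ p := by rw [← Real.rpow_add_one hp0.ne']; congr 1; ring

lemma one_le_self_rpow {p : ℝ} (hp : 2 ≤ p) : 1 ≤ p ^ p :=
  Real.one_le_rpow (by linarith) (by linarith)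

lemma key_upper {p e t : ℝ} (hp : 2 ≤ p) (he : e = 1 ∨ e = -1) (ht : 0 < t) :
    e * (|1 + e * t| ^ (p - 2) * (1 + e * t) - 1) ≤ 4 * p * t + p ^ p * t ^ (p - 1) := by
  have hq : 1 ≤ p - 1 := by linarith
  have htq : 0 ≤ t ^ (p - 1) := by positivity
  have hpt : 0 < p * t := by positivity
  have hpp := one_le_self_rpow hp
  have hmul : t ^ (p - 1) ≤ p ^ p * t ^ (p - 1) := le_mul_of_one_le_left htq hpp
  rcases he with rfl | rfl
  · rw [one_mul, one_mul, abs_rpow_mul_self hp (by linarith)]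
    rcases le_total (t * (p - 1)) 1 with h | h
    · have h0 : 0 ≤ t * (p - 1) := mul_nonneg ht.le (by linarith)
      have h1 := one_add_rpow_le_exp ht.le (zero_le_one.trans hq)
      have h2 := (abs_le.1 (Real.abs_exp_sub_one_sub_id_le (abs_le.2 ⟨by linarith, h⟩))).2
      nlinarith
    · have h1 : (1 + t) ^ (p - 1) ≤ ((p + 1) * t) ^ (p - 1) :=
        Real.rpow_le_rpow (by linarith) (by linarith) (by linarith)
      rw [Real.mul_rpow (by linarith) ht.le] at h1
      have h2 := mul_le_mul_of_nonneg_right (add_one_rpow_le hp) htq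
      linarith
  · rcases le_total t 1 with h | h
    · rw [abs_rpow_mul_self hp (by linarith)]
      have h1 := one_add_mul_self_le_rpow_one_add (s := -1 * t) (by linarith) hq
      linarith
    · have h0 : |1 + -1 * t| ^ (p - 2) * (1 + -1 * t) = -(t - 1) ^ (p - 1) := by
        rw [← abs_rpow_mul_self hp (sub_nonneg.2 h), abs_sub_comm t 1,
          show 1 + -1 * t = 1 - t by ring]
        ring
      rw [h0]
      have h1 : (t - 1) ^ (p - 1) ≤ t ^ (p - 1) :=
        Real.rpow_le_rpow (by linarith) (by linarith) (by linarith)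
      nlinarith

lemma nonneg_of_deriv_nonneg {F F' : ℝ → ℝ} (hF : ∀ t, HasDerivAt F (F' t) t) (h0 : F 0 = 0)
    (h : ∀ t, 0 < t → 0 ≤ F' t) {t : ℝ} (ht : 0 ≤ t) : 0 ≤ F t := by
  have hm : MonotoneOn F (Set.Ici 0) := by
    refine monotoneOn_of_deriv_nonneg (convex_Ici 0)
      (fun t _ => (hF t).continuousAt.continuousWithinAt)
      (fun t _ => (hF t).differentiableAt.differentiableWithinAt) fun t ht => ?_
    rw [interior_Ici] at ht
    rw [(hF t).deriv]
    exact h t ht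
  rw [← h0]
  exact hm Set.self_mem_Ici ht ht

lemma hasDerivAt_bregman_one {p : ℝ} (hp : 2 ≤ p) (e t : ℝ) :
    HasDerivAt (fun t => |1 + e * t| ^ p - 1 - p * (e * t))
      (p * (e * (|1 + e * t| ^ (p - 2) * (1 + e * t) - 1))) t := by
  have hl : HasDerivAt (fun t => e * t) e t := by simpa using (hasDerivAt_id t).const_mul e
  have h := (hasDerivAt_abs_rpow (1 + e * t) (p := p) (by linarith)).comp t (hl.const_add 1)
  exact ((h.sub_const 1).sub (hl.const_mul p)).congr_deriv (by ring)

lemma hasDerivAt_quad_add_rpow {p : ℝ} (hp : 2 ≤ p) (a b t : ℝ) :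
    HasDerivAt (fun t => a * t ^ 2 + b * |t| ^ p)
      (2 * a * t + p * (b * (|t| ^ (p - 2) * t))) t := by
  have h := hasDerivAt_abs_rpow t (p := p) (by linarith)
  exact (((hasDerivAt_pow 2 t).const_mul a).add (h.const_mul b)).congr_deriv (by norm_num; ring)

/-- The two-sided bound at base point `1`, along either direction `e = ±1`. -/
lemma bounds_one {p e t : ℝ} (hp : 2 ≤ p) (he : e = 1 ∨ e = -1) (ht : 0 ≤ t) :
    p / 8 * t ^ 2 + 1 / 2 ^ (p + 1) * |t| ^ p ≤ |1 + e * t| ^ p - 1 - p * (e * t) ∧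
      |1 + e * t| ^ p - 1 - p * (e * t) ≤ 2 * p ^ 2 * t ^ 2 + p ^ p * |t| ^ p := by
  have hp0 : 0 < p := by linarith
  constructor
  · refine sub_nonneg.1 (nonneg_of_deriv_nonneg (fun s => (hasDerivAt_bregman_one hp e s).sub
      (hasDerivAt_quad_add_rpow hp (p / 8) (1 / 2 ^ (p + 1)) s)) ?_ (fun s hs => ?_) ht)
    · simp [Real.zero_rpow hp0.ne']
    · rw [abs_rpow_mul_self hp hs.le]
      have := mul_le_mul_of_nonneg_left (key_lower hp he hs) hp0.le
      linarith
  · refine sub_nonneg.1 (nonneg_of_deriv_nonneg (fun s =>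
      (hasDerivAt_quad_add_rpow hp (2 * p ^ 2) (p ^ p) s).sub
        (hasDerivAt_bregman_one hp e s)) ?_ (fun s hs => ?_) ht)
    · simp [Real.zero_rpow hp0.ne']
    · rw [abs_rpow_mul_self hp hs.le]
      have := mul_le_mul_of_nonneg_left (key_upper hp he hs) hp0.le
      linarith

/-- The two-sided bound at a positive base point, by homogeneity. -/
lemma bounds_pos {p x : ℝ} (hp : 2 ≤ p) (hx : 0 < x) (d : ℝ) :
    p / 8 * (|x| ^ (p - 2) * d ^ 2) + 1 / 2 ^ (p + 1) * |d| ^ p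
        ≤ |x + d| ^ p - |x| ^ p - p * |x| ^ (p - 2) * x * d ∧
      |x + d| ^ p - |x| ^ p - p * |x| ^ (p - 2) * x * d
        ≤ 2 * p ^ 2 * (|x| ^ (p - 2) * d ^ 2) + p ^ p * |d| ^ p := by
  obtain ⟨e, t, he, ht, rfl⟩ : ∃ e t : ℝ, (e = 1 ∨ e = -1) ∧ 0 ≤ t ∧ d = x * (e * t) := by
    rcases le_total 0 d with h | h
    · exact ⟨1, d / x, Or.inl rfl, by positivity, by field_simp⟩
    · exact ⟨-1, -d / x, Or.inr rfl, div_nonneg (by linarith) hx.le, by field_simp⟩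
  have he2 : e ^ 2 = 1 := by rcases he with rfl | rfl <;> norm_num
  have hea : |e| = 1 := by rcases he with rfl | rfl <;> norm_num
  have hxp : 0 < x ^ p := by positivity
  have hx2 : x ^ (p - 2) * x ^ 2 = x ^ p := by
    rw [← Real.rpow_natCast x 2, ← Real.rpow_add hx]; congr 1; norm_num
  have h1 : |x * (e * t)| ^ p = x ^ p * |t| ^ p := by
    rw [abs_mul, abs_mul, hea, one_mul, Real.mul_rpow (abs_nonneg _) (abs_nonneg _),
      abs_of_pos hx]
  have h2 : |x + x * (e * t)| ^ p = x ^ p * |1 + e * t| ^ p := by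
    rw [show x + x * (e * t) = x * (1 + e * t) by ring, abs_mul,
      Real.mul_rpow (abs_nonneg _) (abs_nonneg _), abs_of_pos hx]
  have h3 : x ^ (p - 2) * (x * (e * t)) ^ 2 = x ^ p * t ^ 2 := by
    rw [← hx2, mul_pow, mul_pow, he2]; ring
  have h4 : p * x ^ (p - 2) * x * (x * (e * t)) = x ^ p * (p * (e * t)) := by
    rw [← hx2]; ring
  obtain ⟨l, u⟩ := bounds_one hp he ht
  rw [h1, h2, abs_of_pos hx, h3, h4]
  have l' := mul_le_mul_of_nonneg_left l hxp.le
  have u' := mul_le_mul_of_nonneg_left u hxp.le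
  constructor <;> linarith

lemma bounds_zero {p : ℝ} (hp : 2 ≤ p) (d : ℝ) :
    p / 8 * (|(0 : ℝ)| ^ (p - 2) * d ^ 2) + 1 / 2 ^ (p + 1) * |d| ^ p
        ≤ |0 + d| ^ p - |(0 : ℝ)| ^ p - p * |(0 : ℝ)| ^ (p - 2) * 0 * d ∧
      |0 + d| ^ p - |(0 : ℝ)| ^ p - p * |(0 : ℝ)| ^ (p - 2) * 0 * d
        ≤ 2 * p ^ 2 * (|(0 : ℝ)| ^ (p - 2) * d ^ 2) + p ^ p * |d| ^ p := by
  have hd : 0 ≤ |d| ^ p := by positivity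
  have hpp := le_mul_of_one_le_left hd (one_le_self_rpow hp)
  rw [zero_add, abs_zero, Real.zero_rpow (by linarith : p ≠ 0)]
  -- `0 ^ (p - 2)` is `1` for `p = 2` and `0` otherwise.
  rcases hp.eq_or_lt with rfl | hp
  · norm_num at *
    constructor <;> nlinarith [sq_nonneg d]
  · rw [Real.zero_rpow (by linarith : p - 2 ≠ 0)]
    have hc : 1 / (2 : ℝ) ^ (p + 1) ≤ 1 :=
      (div_le_one (by positivity)).2 (Real.one_le_rpow one_le_two (by linarith))
    have := mul_le_of_le_one_left hd hc
    constructor <;> linarith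

lemma bounds_coord {p : ℝ} (hp : 2 ≤ p) (x d : ℝ) :
    p / 8 * (|x| ^ (p - 2) * d ^ 2) + 1 / 2 ^ (p + 1) * |d| ^ p
        ≤ |x + d| ^ p - |x| ^ p - p * |x| ^ (p - 2) * x * d ∧
      |x + d| ^ p - |x| ^ p - p * |x| ^ (p - 2) * x * d
        ≤ 2 * p ^ 2 * (|x| ^ (p - 2) * d ^ 2) + p ^ p * |d| ^ p := by
  rcases lt_trichotomy x 0 with h | rfl | h
  · have := bounds_pos hp (neg_pos.2 h) (-d)
    rw [← neg_add, abs_neg, abs_neg, abs_neg, neg_sq] at this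
    convert this using 2 <;> ring
  · exact bounds_zero hp d
  · exact bounds_pos hp h d

theorem stmt0 {n : ℕ} (p : ℝ) (hp : 2 ≤ p) (x Δ : Fin n → ℝ)
    (r : Fin n → ℝ) (hr : ∀ i, r i = |x i| ^ (p - 2)) :
    (p / 8) * (∑ i, r i * (Δ i) ^ 2) + (1 / 2 ^ (p + 1)) * (lpNorm p Δ) ^ p
        ≤ omegaP p (x + Δ) x ∧
      omegaP p (x + Δ) x
        ≤ 2 * p ^ 2 * (∑ i, r i * (Δ i) ^ 2) + p ^ p * (lpNorm p Δ) ^ p := by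
  have hN : (lpNorm p Δ) ^ p = ∑ i, |Δ i| ^ p := by
    rw [lpNorm, ← Real.rpow_mul (Finset.sum_nonneg fun i _ => by positivity),
      one_div_mul_cancel (by linarith), Real.rpow_one]
  have hω : omegaP p (x + Δ) x
      = ∑ i, (|x i + Δ i| ^ p - |x i| ^ p - p * |x i| ^ (p - 2) * x i * Δ i) := by
    simp [omegaP, Finset.sum_sub_distrib]
  rw [hN, hω]
  simp only [hr, Finset.mul_sum, ← Finset.sum_add_distrib]
  exact ⟨Finset.sum_le_sum fun i _ => (bounds_coord hp (x i) (Δ i)).1,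
    Finset.sum_le_sum fun i _ => (bounds_coord hp (x i) (Δ i)).2⟩
end

section
/- Let p ≥ 2 be a real number and let A ≥ 0, a > 0, λ > 0 be reals satisfying A' = A + a and 5 λ a^p = (A')^{p−1}. Then (A')^{1/p} ≥ A^{1/p} + 1/(5 p λ^{1/p}). Consequently, if A_0 ≥ 0 and for every t the reals a_{t+1} > 0, λ_t > 0 satisfy A_{t+1} = A_t + a_{t+1} and 5 λ_t a_{t+1}^p = A_{t+1}^{p−1}, then A_T^{1/p} ≥ A_0^{1/p} + Σ_{t=0}^{T−1} 1/(5 p λ_t^{1/p}) for every T ≥ 1. -/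
open Finset

/-!
Since `x ↦ x ^ (1 / p)` is concave, its increment from `A` to `A' = A + a` is at least
`(1 / p) * a * A' ^ (1 / p) / A'`, the tangent bound at `A'` (Bernoulli's inequality with exponent
`1 / p ≤ 1`). Multiplying the coupling relation `5 λ a ^ p = A' ^ (p - 1)` by `A'` and taking
`p`-th roots gives `A' = 5 ^ (1 / p) * λ ^ (1 / p) * a * A' ^ (1 / p)`, so `5 ^ (1 / p) ≤ 5` turns
the tangent bound into the claimed `1 / (5 p λ ^ (1 / p))`. The sequence version telescopes.
-/

lemma rpow_inv_step {p : ℝ} (hp : 2 ≤ p) {A A' a lam : ℝ} (hA : 0 ≤ A) (ha : 0 < a)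
    (hl : 0 < lam) (hA' : A' = A + a) (h : 5 * lam * a ^ p = A' ^ (p - 1)) :
    A ^ (1 / p) + 1 / (5 * p * lam ^ (1 / p)) ≤ A' ^ (1 / p) := by
  have hp0 : 0 < p := by linarith
  have hpos : 0 < A' := by linarith
  have hq1 : 1 / p ≤ 1 := by rw [div_le_one hp0]; linarith
  have hB : 0 < A' ^ (1 / p) := Real.rpow_pos_of_pos hpos _
  have hL : 0 < lam ^ (1 / p) := Real.rpow_pos_of_pos hl _
  have hbern : (A / A') ^ (1 / p) ≤ 1 + 1 / p * (-(a / A')) := by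
    have hs : -1 ≤ -(a / A') := by
      rw [neg_le_neg_iff, div_le_one hpos]; linarith
    have hAA : A / A' = 1 + -(a / A') := by
      field_simp; linarith
    rw [hAA]
    exact rpow_one_add_le_one_add_mul_self hs (by positivity) hq1
  have hmul : 5 * lam * a ^ p * A' = A' ^ p := by
    rw [h, Real.rpow_sub_one hpos.ne']
    field_simp
  have hroot : (5 : ℝ) ^ (1 / p) * lam ^ (1 / p) * a * A' ^ (1 / p) = A' := by
    have e := congrArg (fun x : ℝ => x ^ (1 / p)) hmul
    rw [Real.mul_rpow (by positivity) hpos.le, Real.mul_rpow (by positivity) (by positivity),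
      Real.mul_rpow (by norm_num) hl.le, ← Real.rpow_mul ha.le, ← Real.rpow_mul hpos.le,
      mul_one_div_cancel hp0.ne', Real.rpow_one, Real.rpow_one] at e
    exact e
  have h5 : (5 : ℝ) ^ (1 / p) ≤ 5 := by
    simpa using Real.rpow_le_rpow_of_exponent_le (by norm_num : (1 : ℝ) ≤ 5) hq1
  have hkey : A' ≤ 5 * (lam ^ (1 / p) * a * A' ^ (1 / p)) := by
    calc A' = (5 : ℝ) ^ (1 / p) * (lam ^ (1 / p) * a * A' ^ (1 / p)) := by
          rw [← mul_assoc, ← mul_assoc, hroot]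
      _ ≤ _ := by gcongr
  rw [Real.div_rpow hA hpos.le, div_le_iff₀ hB] at hbern
  have hinc : 1 / (5 * p * lam ^ (1 / p)) ≤ 1 / p * (a / A') * A' ^ (1 / p) := by
    have e : 1 / p * (a / A') * A' ^ (1 / p) = (a * A' ^ (1 / p)) / (p * A') := by
      field_simp
    rw [e, div_le_div_iff₀ (by positivity) (by positivity)]
    nlinarith [mul_le_mul_of_nonneg_left hkey hp0.le]
  linarith

theorem stmt2 (p : ℝ) (hp : 2 ≤ p) :
    -- single-step claim
    (∀ A A' a lam : ℝ, 0 ≤ A → 0 < a → 0 < lam →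
        A' = A + a → 5 * lam * a ^ p = A' ^ (p - 1) →
        A ^ (1 / p) + 1 / (5 * p * lam ^ (1 / p)) ≤ A' ^ (1 / p)) ∧
    -- consequence for sequences
    (∀ (A a lam : ℕ → ℝ), 0 ≤ A 0 →
        (∀ t, 0 < a (t + 1)) → (∀ t, 0 < lam t) →
        (∀ t, A (t + 1) = A t + a (t + 1)) →
        (∀ t, 5 * lam t * (a (t + 1)) ^ p = (A (t + 1)) ^ (p - 1)) →
        ∀ T : ℕ, 1 ≤ T →
          (A 0) ^ (1 / p) + ∑ t ∈ Finset.range T, 1 / (5 * p * (lam t) ^ (1 / p))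
            ≤ (A T) ^ (1 / p)) := by
  refine ⟨fun A A' a lam hA ha hl hA' h => rpow_inv_step hp hA ha hl hA' h, ?_⟩
  intro A a lam hA0 ha hl hA h T _
  have hnn : ∀ t, 0 ≤ A t := by
    intro t
    induction t with
    | zero => exact hA0
    | succ t ih => rw [hA t]; linarith [ha t]
  clear * - hp hnn ha hl hA h
  induction T with
  | zero => simp
  | succ T ih =>
    rw [Finset.sum_range_succ]
    linarith [rpow_inv_step hp (hnn T) (ha T) (hl T) (hA T) (h T)]
end

section
/- Let B_1, …, B_k > 0 and r_1, …, r_k > 0 be reals, and let m > 1 and β > 0. If B_i^m ≥ β Σ_{j=1}^{i} B_j r_j for every i ∈ {1, …, k}, then B_i ≥ ( ((m−1)/m) · β · Σ_{j=1}^{i} r_j )^{1/(m−1)} for every i ∈ {1, …, k}. -/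
/-!
Put `T i = β * ∑ j ≤ i, B j * r j` and `p = (m - 1) / m`, so that the hypothesis reads
`T i ^ (1 / m) ≤ B i`. Hence `T` satisfies the discrete differential inequality
`T i - T (i - 1) ≥ β * r i * T i ^ (1 / m)`. Concavity of `x ↦ x ^ p` (Bernoulli's inequality)
integrates it: each increment of `T ^ p` is at least `p * β * r i` (`rpow_step`), whence
`T i ^ p ≥ p * β * ∑ j ≤ i, r j`. The claim follows from `T i ^ p ≤ (B i ^ m) ^ p = B i ^ (m - 1)`.
-/

open Finset

/-- The tangent line of the concave function `x ↦ x ^ p` at `t` bounds the increment of `x ^ p`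
from `b` to `t` below by `p * t ^ (p - 1) * (t - b)`, which is at least `p * c` by `hc`. -/
lemma rpow_step {p b t c : ℝ} (hp0 : 0 ≤ p) (hp1 : p ≤ 1) (hb : 0 ≤ b) (ht : 0 < t)
    (hc : c * t ^ (1 - p) ≤ t - b) : b ^ p + p * c ≤ t ^ p := by
  have hbern := rpow_one_add_le_one_add_mul_self (s := b / t - 1)
    (by linarith [div_nonneg hb ht.le]) hp0 hp1
  rw [add_sub_cancel, Real.div_rpow hb ht.le, div_le_iff₀ (Real.rpow_pos_of_pos ht p)] at hbern
  have hmul : t ^ p * t ^ (1 - p) = t := by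
    rw [← Real.rpow_add ht, add_sub_cancel, Real.rpow_one]
  have hct : c * t ≤ t ^ p * (t - b) := by
    calc c * t = t ^ p * (c * t ^ (1 - p)) := by linear_combination -c * hmul
      _ ≤ t ^ p * (t - b) := by gcongr
  have hc' : c ≤ t ^ p * (1 - b / t) := by
    rw [← mul_le_mul_iff_left₀ ht]
    calc c * t ≤ t ^ p * (t - b) := hct
      _ = t ^ p * (1 - b / t) * t := by field_simp
  nlinarith [mul_le_mul_of_nonneg_left hc' hp0]

theorem stmt6 (k : ℕ) (B r : ℕ → ℝ) (m β : ℝ) (hm : 1 < m) (hβ : 0 < β)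
    (hB : ∀ i ∈ Finset.Icc 1 k, 0 < B i)
    (hr : ∀ i ∈ Finset.Icc 1 k, 0 < r i)
    (h : ∀ i ∈ Finset.Icc 1 k, β * ∑ j ∈ Finset.Icc 1 i, B j * r j ≤ (B i) ^ m) :
    ∀ i ∈ Finset.Icc 1 k,
      ((m - 1) / m * β * ∑ j ∈ Finset.Icc 1 i, r j) ^ (1 / (m - 1)) ≤ B i := by
  have hm0 : 0 < m := by linarith
  have hm1 : 0 < m - 1 := by linarith
  have hp0 : 0 ≤ (m - 1) / m := by positivity
  have hp1 : (m - 1) / m ≤ 1 := by rw [div_le_one hm0]; linarith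
  have hT0 : ∀ i ≤ k, 0 ≤ β * ∑ j ∈ Finset.Icc 1 i, B j * r j := fun i hi =>
    mul_nonneg hβ.le <| sum_nonneg fun j hj => by
      have hj' : j ∈ Finset.Icc 1 k := by simp only [mem_Icc] at hj ⊢; omega
      exact (mul_pos (hB j hj') (hr j hj')).le
  have key : ∀ i ≤ k, (m - 1) / m * β * ∑ j ∈ Finset.Icc 1 i, r j ≤
      (β * ∑ j ∈ Finset.Icc 1 i, B j * r j) ^ ((m - 1) / m) := by
    intro i
    induction i with
    | zero => intro _; simp [Real.zero_rpow (div_pos hm1 hm0).ne']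
    | succ n ih =>
      intro hn
      have hmem : n + 1 ∈ Finset.Icc 1 k := by simp only [mem_Icc]; omega
      have hBn := hB _ hmem
      have hrn := hr _ hmem
      have hTn := hT0 n (by omega)
      have hS := sum_Icc_succ_top (show 1 ≤ n + 1 by omega) (fun j => B j * r j)
      have hroot : (β * ∑ j ∈ Finset.Icc 1 (n + 1), B j * r j) ^ (1 - (m - 1) / m)
          ≤ B (n + 1) := by
        have hexp : 1 - (m - 1) / m = m⁻¹ := by field_simp; ring
        rw [hexp, Real.rpow_inv_le_iff_of_pos (hT0 _ hn) hBn.le hm0]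
        exact h _ hmem
      have hstep := rpow_step (c := β * r (n + 1)) hp0 hp1 hTn
        (t := β * ∑ j ∈ Finset.Icc 1 (n + 1), B j * r j)
        (by rw [hS, mul_add]; positivity)
        (by
          have := mul_le_mul_of_nonneg_left hroot (mul_pos hβ hrn).le
          have hdiff : β * ∑ j ∈ Finset.Icc 1 (n + 1), B j * r j
              - β * ∑ j ∈ Finset.Icc 1 n, B j * r j = β * r (n + 1) * B (n + 1) := by
            rw [hS]; ring
          rwa [hdiff])
      rw [sum_Icc_succ_top (show 1 ≤ n + 1 by omega) r, mul_add, mul_assoc _ β (r (n + 1))]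
      linarith [ih (by omega)]
  intro i hi
  have hik := (mem_Icc.mp hi).2
  have hR : 0 ≤ ∑ j ∈ Finset.Icc 1 i, r j := sum_nonneg fun j hj => by
    have hj' : j ∈ Finset.Icc 1 k := by simp only [mem_Icc] at hj ⊢; omega
    exact (hr j hj').le
  rw [one_div, Real.rpow_inv_le_iff_of_pos (by positivity) (hB i hi).le hm1]
  calc _ ≤ _ := key i hik
    _ ≤ (B i ^ m) ^ ((m - 1) / m) := Real.rpow_le_rpow (hT0 i hik) (h i hi) hp0
    _ = B i ^ (m - 1) := by
      rw [← Real.rpow_mul (hB i hi).le, mul_div_cancel₀ _ hm0.ne']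
end

section
/- Let B_1, …, B_k > 0 be a non-decreasing sequence of reals and r_1, …, r_k > 0 reals, and let β > 0. If B_i ≥ β Σ_{j=1}^{i} B_j r_j for every i ∈ {1, …, k}, then B_i ≥ exp( β · Σ_{j=1}^{i} r_j − 1 ) · B_1 for every i ∈ {1, …, k}. -/
/-!
Write `a j = β * r j`, `A i = ∑_{j ≤ i} a j` and `S i = ∑_{j ≤ i} a j * B j`, so that the hypothesis
reads `S i ≤ B i`. This is a discrete form of the differential inequality `G' ≥ max (G, B 1)`,
`G 0 = 0`, whose solutions satisfy `G t ≥ t * B 1` and, for `t ≥ 1`, `G t ≥ exp (t - 1) * B 1`.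
Both bounds hold for `S i` at `t = A i`, by induction on `i` (`partial_sum_bounds`); the exponential
step is `exp_mul_le_of_step`, and the step during which `A` crosses `1` is split at `1`.
If `A i ≥ 1` then `B i ≥ S i` concludes; if `A i < 1` then monotonicity alone suffices.
-/

open Finset

/-- Discrete exponential growth: if adding `d * b` to `x` does not exceed `s` and `b` is at least
`s`, then `x ≤ (1 - d) * s ≤ exp (-d) * s`. -/
lemma exp_mul_le_of_step {x d b s : ℝ} (hd : 0 ≤ d) (hs : 0 ≤ s) (hsb : s ≤ b)
    (hx : x + d * b ≤ s) : Real.exp d * x ≤ s := by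
  have h1 : d * s ≤ d * b := mul_le_mul_of_nonneg_left hsb hd
  have h2 : (-d + 1) * s ≤ Real.exp (-d) * s :=
    mul_le_mul_of_nonneg_right (Real.add_one_le_exp (-d)) hs
  have h3 : x ≤ Real.exp (-d) * s := by linarith
  calc Real.exp d * x ≤ Real.exp d * (Real.exp (-d) * s) :=
        mul_le_mul_of_nonneg_left h3 (Real.exp_pos d).le
    _ = s := by rw [← mul_assoc, ← Real.exp_add]; simp

/-- The linear and the exponential lower bound for the weighted partial sums. The former carries
the induction until the partial sums of `β * r j` reach `1`, the latter from there on. -/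
lemma partial_sum_bounds (k : ℕ) (B r : ℕ → ℝ) (β : ℝ) (hβ : 0 < β)
    (hB : ∀ i ∈ Finset.Icc 1 k, 0 < B i)
    (hmin : ∀ i ∈ Finset.Icc 1 k, B 1 ≤ B i)
    (hr : ∀ i ∈ Finset.Icc 1 k, 0 < r i)
    (h : ∀ i ∈ Finset.Icc 1 k, β * ∑ j ∈ Finset.Icc 1 i, B j * r j ≤ B i) (i : ℕ) (hi : i ≤ k) :
    (β * ∑ j ∈ Finset.Icc 1 i, r j) * B 1 ≤ β * ∑ j ∈ Finset.Icc 1 i, B j * r j ∧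
    (1 ≤ β * ∑ j ∈ Finset.Icc 1 i, r j →
      Real.exp (β * ∑ j ∈ Finset.Icc 1 i, r j - 1) * B 1 ≤
        β * ∑ j ∈ Finset.Icc 1 i, B j * r j) := by
  induction i with
  | zero => norm_num
  | succ n ih =>
    obtain ⟨ih1, ih2⟩ := ih (by omega)
    have hmem : n + 1 ∈ Finset.Icc 1 k := by simp; omega
    have hstep := h _ hmem
    have hb := hmin _ hmem
    have ha : 0 < β * r (n + 1) := mul_pos hβ (hr _ hmem)
    have hS : 0 ≤ β * ∑ j ∈ Finset.Icc 1 (n + 1), B j * r j := by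
      refine mul_nonneg hβ.le (Finset.sum_nonneg fun j hj => ?_)
      have hj' : j ∈ Finset.Icc 1 k := by simp at hj ⊢; omega
      exact (mul_pos (hB j hj') (hr j hj')).le
    rw [Finset.sum_Icc_succ_top (by omega)] at hstep hS ⊢
    rw [Finset.sum_Icc_succ_top (by omega)]
    rw [mul_add] at hstep hS ⊢
    rw [mul_add]
    rw [show β * (B (n + 1) * r (n + 1)) = β * r (n + 1) * B (n + 1) by ring] at hstep hS ⊢
    generalize β * r (n + 1) = a at *
    generalize β * ∑ j ∈ Finset.Icc 1 n, r j = A at *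
    generalize β * ∑ j ∈ Finset.Icc 1 n, B j * r j = S at *
    have hab : a * B 1 ≤ a * B (n + 1) := mul_le_mul_of_nonneg_left hb ha.le
    refine ⟨by linarith, fun hA => ?_⟩
    rcases le_total 1 A with h1 | h1
    · have hg := exp_mul_le_of_step ha.le hS hstep le_rfl
      refine le_trans ?_ hg
      rw [show A + a - 1 = a + (A - 1) by ring, Real.exp_add, mul_assoc]
      exact mul_le_mul_of_nonneg_left (ih2 h1) (Real.exp_pos a).le
    · -- The part `1 - A` of the step raises the sum to at least `B 1`; the rest is exponential.
      refine exp_mul_le_of_step (by linarith) hS hstep ?_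
      have hc : (1 - A) * B 1 ≤ (1 - A) * B (n + 1) :=
        mul_le_mul_of_nonneg_left hb (by linarith)
      linarith

theorem stmt7 (k : ℕ) (B r : ℕ → ℝ) (β : ℝ) (hβ : 0 < β)
    (hB : ∀ i ∈ Finset.Icc 1 k, 0 < B i)
    (hmono : ∀ i ∈ Finset.Icc 1 k, ∀ j ∈ Finset.Icc 1 k, i ≤ j → B i ≤ B j)
    (hr : ∀ i ∈ Finset.Icc 1 k, 0 < r i)
    (h : ∀ i ∈ Finset.Icc 1 k, β * ∑ j ∈ Finset.Icc 1 i, B j * r j ≤ B i) :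
    ∀ i ∈ Finset.Icc 1 k,
      Real.exp (β * ∑ j ∈ Finset.Icc 1 i, r j - 1) * B 1 ≤ B i := by
  intro i hi
  have hk := Finset.mem_Icc.1 hi
  have h1k : 1 ∈ Finset.Icc 1 k := by simp; omega
  have hmin : ∀ j ∈ Finset.Icc 1 k, B 1 ≤ B j := fun j hj =>
    hmono 1 h1k j hj (Finset.mem_Icc.1 hj).1
  rcases le_total 1 (β * ∑ j ∈ Finset.Icc 1 i, r j) with hA | hA
  · exact ((partial_sum_bounds k B r β hβ hB hmin hr h i hk.2).2 hA).trans (h i hi)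
  · have he : Real.exp (β * ∑ j ∈ Finset.Icc 1 i, r j - 1) ≤ 1 :=
      Real.exp_le_one_iff.2 (by linarith)
    exact (mul_le_of_le_one_left (hB 1 h1k).le he).trans (hmin i hi)
end

section
/- Let s ≥ 2 be a real number, A an n × d real matrix, g ∈ ℝ^n, and R̃ an n × n diagonal matrix with nonnegative entries. Define f : ℝ^d → ℝ by f(x) = ⟨g, Ax⟩ + (Ax)ᵀ R̃ (Ax) + ‖Ax‖_s^s. If x* is a global minimizer of f, then s ‖Ax*‖_s^s = −2 (Ax*)ᵀ R̃ (Ax*) − ⟨g, Ax*⟩. -/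
/-!
Along the ray `t ↦ t • xstar` with `t > 0`, the three terms of `f` are homogeneous of degrees
`1`, `2` and `s`, so `f (t • xstar) = t * a + t ^ 2 * b + t ^ s * c`, where `a`, `b`, `c` are the
values of these terms at `xstar`. Minimality of `xstar` makes `t = 1` a local minimum of this
function of one variable, and Fermat's theorem gives `a + 2 * b + s * c = 0`.
-/

open Finset

theorem stmt10 {n d : ℕ} (s : ℝ) (hs : 2 ≤ s)
    (A : Matrix (Fin n) (Fin d) ℝ) (g : Fin n → ℝ)
    (Rt : Fin n → ℝ) (hRt : ∀ i, 0 ≤ Rt i)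
    (f : (Fin d → ℝ) → ℝ)
    (hf : ∀ x, f x = (∑ i, g i * A.mulVec x i)
        + (∑ i, Rt i * (A.mulVec x i) ^ 2)
        + ∑ i, |A.mulVec x i| ^ s)
    (xstar : Fin d → ℝ) (hmin : ∀ y, f xstar ≤ f y) :
    s * (∑ i, |A.mulVec xstar i| ^ s)
      = -2 * (∑ i, Rt i * (A.mulVec xstar i) ^ 2)
        - ∑ i, g i * A.mulVec xstar i := by
  have hray : ∀ t : ℝ, 0 < t → f (t • xstar) = t * (∑ i, g i * A.mulVec xstar i)
      + t ^ 2 * (∑ i, Rt i * (A.mulVec xstar i) ^ 2)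
      + t ^ s * ∑ i, |A.mulVec xstar i| ^ s := by
    intro t ht
    rw [hf, Matrix.mulVec_smul, mul_sum, mul_sum, mul_sum]
    simp only [Pi.smul_apply, smul_eq_mul]
    congr 1
    · congr 1 <;> exact sum_congr rfl fun i _ => by ring
    · refine sum_congr rfl fun i _ => ?_
      rw [abs_mul, abs_of_pos ht, Real.mul_rpow ht.le (abs_nonneg _)]
  have hx := hf xstar
  set a := ∑ i, g i * A.mulVec xstar i
  set b := ∑ i, Rt i * (A.mulVec xstar i) ^ 2
  set c := ∑ i, |A.mulVec xstar i| ^ s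
  have hloc : IsLocalMin (fun t : ℝ => t * a + t ^ 2 * b + t ^ s * c) 1 := by
    filter_upwards [lt_mem_nhds (zero_lt_one' ℝ)] with t ht
    have h := hmin (t • xstar)
    rw [hray t ht, hx] at h
    simpa using h
  have hderiv : HasDerivAt (fun t : ℝ => t * a + t ^ 2 * b + t ^ s * c)
      (1 * a + (2 : ℕ) * (1 : ℝ) ^ (2 - 1) * b + s * (1 : ℝ) ^ (s - 1) * c) 1 :=
    (((hasDerivAt_id (1 : ℝ)).mul_const a).add ((hasDerivAt_pow 2 (1 : ℝ)).mul_const b)).add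
      ((Real.hasDerivAt_rpow_const (Or.inl one_ne_zero)).mul_const c)
  have h0 := hloc.hasDerivAt_eq_zero hderiv
  norm_num at h0
  linarith
end
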